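/- arXiv:2212.05754 — 2 statements merged into one kernel-verified Lean document; each statement's English description precedes it below -/
import Mathlib

section
/- If χ : M → ℂ is an additive homomorphism of non-trivial-ends type whose image is exactly the subgroup ℤ ⊂ ℂ of integers (χ is discrete of rank one, in normalized form), then there exists a system of handle generators α₁, β₁, …, α_g, β_g in M with χ(αᵢ) = χ(βᵢ) = 1 for every i = 1, …, g. -/
open scoped BigOperators

/-- The standard symplectic (intersection) form on `ℤ^{2g}`. -/
def symplecticForm (g : ℕ) (x y : Fin (2 * g) → ℤ) : ℤ :=
  ∑ i : Fin g,
    (x ⟨2 * i.1, by have := i.isLt; omega⟩ * y ⟨2 * i.1 + 1, by have := i.isLt; omega⟩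
      - x ⟨2 * i.1 + 1, by have := i.isLt; omega⟩ * y ⟨2 * i.1, by have := i.isLt; omega⟩)

/-- `H₁(S_{g,n}; ℤ)` modelled as `ℤ^{2g} ⊕ ℤ^{n-1}`, the second factor being the
peripheral subgroup. -/
abbrev HomologyPunctured (g n : ℕ) := (Fin (2 * g) → ℤ) × (Fin (n - 1) → ℤ)

/-- `α₁, β₁, …, α_g, β_g` is a system of handle generators of `ℤ^{2g} ⊕ ℤ^{n-1}`, with
respect to the intersection form given by the standard symplectic form on `ℤ^{2g}`
extended by zero on the peripheral factor. -/
def IsHandleSystem (g n : ℕ) (α β : Fin g → HomologyPunctured g n) : Prop :=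
  ∀ i j : Fin g,
    symplecticForm g (α i).1 (α j).1 = 0 ∧ symplecticForm g (β i).1 (β j).1 = 0 ∧
      symplecticForm g (α i).1 (β j).1 = (if i = j then 1 else 0)

/-!
Write `χ (x, y) = F x • a + χ (0, y)` with `F` an integral functional, and let `d` generate the
integers `c` with `c • a` a value of `χ` on the peripheral subgroup. It suffices to find a handle
system of `ℤ^{2g}` on which `F ≡ 1` modulo `d`, since peripheral classes then absorb the error; that
`a` is a value of `χ` says that `F` is primitive modulo `d`.

By unimodularity `F = k ω(u, ·)` for a hyperbolic pair `(u, v)`, with `k` prime to `d`, so `F` is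
congruent modulo `d` to `ω(p, ·)` with `p = k u + d v` primitive. Complete `p` to a hyperbolic
pair `(p, q)` and choose hyperbolic pairs `(αᵢ, βᵢ)` in its orthogonal complement. The pairs
`(q, q - p + ∑ᵢ (αᵢ - βᵢ))` and `(αᵢ + q, βᵢ + q)` form a handle system on which `ω(p, ·) = 1`.
-/

section SymplecticFamily

open Module

variable {R V : Type*} [CommRing R] [AddCommGroup V] [Module R V] {ω : LinearMap.BilinForm R V}

/-- Hyperbolic pairs `(α i, β i)` that are mutually orthogonal for `ω`: the abstract form of a
system of handle generators. The pairs are not required to span. -/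
def IsSymplecticFamily {ι : Type*} [DecidableEq ι] (ω : LinearMap.BilinForm R V) (α β : ι → V) :
    Prop :=
  ∀ i j, ω (α i) (α j) = 0 ∧ ω (β i) (β j) = 0 ∧ ω (α i) (β j) = if i = j then 1 else 0

/-- The vectors orthogonal to both `p` and `q`; it is a complement of the plane they span when
`(p, q)` is a hyperbolic pair. -/
def pairOrthogonal (ω : LinearMap.BilinForm R V) (p q : V) : Submodule R V :=
  (ω p).ker ⊓ (ω q).ker

theorem mem_pairOrthogonal {p q x : V} :
    x ∈ pairOrthogonal ω p q ↔ ω p x = 0 ∧ ω q x = 0 := by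
  simp only [pairOrthogonal, Submodule.mem_inf, LinearMap.mem_ker]

theorem finrank_le_finrank_pairOrthogonal_add_two [IsDomain R] [Module.Finite R V] (p q : V) :
    finrank R V ≤ finrank R (pairOrthogonal ω p q) + 2 := by
  have hker : ((ω p).prod (ω q)).ker = pairOrthogonal ω p q := LinearMap.ker_prod _ _
  have hrange : finrank R ((ω p).prod (ω q)).range ≤ 2 :=
    (Submodule.finrank_le _).trans_eq (by simp)
  have hnullity := Submodule.finrank_quotient_add_finrank ((ω p).prod (ω q)).ker
  rw [((ω p).prod (ω q)).quotKerEquivRange.finrank_eq, hker] at hnullity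
  omega

/-- The orthogonal projection along the plane spanned by a hyperbolic pair `(p, q)`. -/
def pairProjection (hω : ω.IsAlt) {p q : V} (hpq : ω p q = 1) : V →ₗ[R] pairOrthogonal ω p q :=
  (LinearMap.id + (ω q).smulRight p - (ω p).smulRight q).codRestrict _ fun x => by
    have hqp : ω q p = -1 := by rw [← hω.neg_eq, hpq]
    simp [mem_pairOrthogonal, hω.self_eq_zero, hpq, hqp]

theorem coe_pairProjection (hω : ω.IsAlt) {p q : V} (hpq : ω p q = 1) (x : V) :
    (pairProjection hω hpq x : V) = x + ω q x • p - ω p x • q :=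
  rfl

theorem pairProjection_coe (hω : ω.IsAlt) {p q : V} (hpq : ω p q = 1)
    (w : pairOrthogonal ω p q) : pairProjection hω hpq w = w := by
  obtain ⟨hp, hq⟩ := mem_pairOrthogonal.1 w.2
  ext
  simp [coe_pairProjection, hp, hq]

theorem restrict_pairProjection (hω : ω.IsAlt) {p q : V} (hpq : ω p q = 1) (x : V)
    (w : pairOrthogonal ω p q) :
    ω.restrict (pairOrthogonal ω p q) (pairProjection hω hpq x) w = ω x w := by
  obtain ⟨hp, hq⟩ := mem_pairOrthogonal.1 w.2
  change ω (pairProjection hω hpq x : V) w = ω x w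
  simp [coe_pairProjection, hp, hq]

theorem surjective_restrict_pairOrthogonal (hω : ω.IsAlt) (hsurj : Function.Surjective ω) {p q : V}
    (hpq : ω p q = 1) : Function.Surjective (ω.restrict (pairOrthogonal ω p q)) := by
  intro F
  obtain ⟨x, hx⟩ := hsurj (F ∘ₗ pairProjection hω hpq)
  refine ⟨pairProjection hω hpq x, LinearMap.ext fun w => ?_⟩
  rw [restrict_pairProjection, hx, LinearMap.comp_apply, pairProjection_coe]

theorem IsSymplecticFamily.cons (hω : ω.IsAlt) {g : ℕ} {α β : Fin g → V}
    (h : IsSymplecticFamily ω α β) {p q : V} (hpq : ω p q = 1)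
    (hα : ∀ i, α i ∈ pairOrthogonal ω p q) (hβ : ∀ i, β i ∈ pairOrthogonal ω p q) :
    IsSymplecticFamily ω (Fin.cons p α : Fin (g + 1) → V) (Fin.cons q β) := by
  simp only [mem_pairOrthogonal] at hα hβ
  have hαp (i) : ω (α i) p = 0 := hω.eq_iff.1 (hα i).1
  have hαq (i) : ω (α i) q = 0 := hω.eq_iff.1 (hα i).2
  have hβq (i) : ω (β i) q = 0 := hω.eq_iff.1 (hβ i).2
  intro i j
  cases i using Fin.cases <;> cases j using Fin.cases <;>
    simp [hω.self_eq_zero, hpq, hα, hβ, hαp, hαq, hβq, h _ _, Fin.succ_ne_zero,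
      (Fin.succ_ne_zero _).symm]

theorem exists_isSymplecticFamily_forall_eq_one (hω : ω.IsAlt) {g : ℕ} {α β : Fin g → V}
    (h : IsSymplecticFamily ω α β) {p q : V} (hpq : ω p q = 1)
    (hα : ∀ i, α i ∈ pairOrthogonal ω p q) (hβ : ∀ i, β i ∈ pairOrthogonal ω p q) :
    ∃ α' β' : Fin (g + 1) → V, IsSymplecticFamily ω α' β' ∧
      ∀ i, ω p (α' i) = 1 ∧ ω p (β' i) = 1 := by
  simp only [mem_pairOrthogonal] at hα hβ
  have hqp : ω q p = -1 := by rw [← hω.neg_eq, hpq]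
  have hαq (i) : ω (α i) q = 0 := hω.eq_iff.1 (hα i).2
  have hβq (i) : ω (β i) q = 0 := hω.eq_iff.1 (hβ i).2
  have hβα (i j) : ω (β i) (α j) = if j = i then -1 else 0 := by
    rw [← hω.neg_eq, (h j i).2.2, apply_ite Neg.neg, neg_zero]
  -- `ω p` is `1` on all the translates `α i + q`, `β i + q`; the sum makes `q - p`
  -- orthogonal to them.
  let z := q - p + ∑ i, (α i - β i)
  have htranslate : IsSymplecticFamily ω (fun i => α i + q) (fun i => β i + q) := by
    intro i j
    simp [h i j, hα, hβ, hαq, hβq, hω.self_eq_zero]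
  have hzα (i) : ω z (α i + q) = 0 := by
    simp [z, hα, hpq, hω.self_eq_zero, hαq, hβq, h _ _, hβα]
  have hzβ (i) : ω z (β i + q) = 0 := by
    simp [z, hβ, hpq, hω.self_eq_zero, hαq, hβq, h _ _]
  have hqz : ω q z = 1 := by simp [z, hα, hβ, hqp, hω.self_eq_zero]
  have hpz : ω p z = 1 := by simp [z, hα, hβ, hpq, hω.self_eq_zero]
  refine ⟨Fin.cons q fun i => α i + q, Fin.cons z fun i => β i + q,
    htranslate.cons hω hqz ?_ ?_, ?_⟩
  · intro i
    simp [mem_pairOrthogonal, hα, hω.self_eq_zero, hzα]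
  · intro i
    simp [mem_pairOrthogonal, hβ, hω.self_eq_zero, hzβ]
  · intro i
    cases i using Fin.cases <;> simp [hα, hβ, hpq, hpz]

theorem exists_dual_smul_eq [Projective R V] {A : Type*} [AddCommGroup A] [Module R A]
    (φ : V →ₗ[R] A) {a : A} (hφ : φ.range ≤ R ∙ a) : ∃ F : Dual R V, ∀ x, φ x = F x • a := by
  rw [← LinearMap.range_toSpanSingleton] at hφ
  obtain ⟨F, hF⟩ := projective_lifting_property (LinearMap.toSpanSingleton R A a).rangeRestrict
    (φ.codRestrict _ fun x => hφ ⟨x, rfl⟩) (LinearMap.surjective_rangeRestrict _)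
  exact ⟨F, fun x => (congrArg Subtype.val (LinearMap.congr_fun hF x)).symm⟩

section PID

variable [IsDomain R] [IsPrincipalIdealRing R] [Free R V]

theorem exists_dual_eq_smul_primitive [Nontrivial V] (F : Dual R V) :
    ∃ (k : R) (G : Dual R V), F = k • G ∧ ∃ x, G x = 1 := by
  obtain rfl | hF := eq_or_ne F 0
  · let b := Free.chooseBasis R V
    have i : Free.ChooseBasisIndex R V := b.index_nonempty.some
    exact ⟨0, b.coord i, (zero_smul _ _).symm, b i, by simp⟩
  let k := Submodule.IsPrincipal.generator F.range
  have hspan : R ∙ k = F.range := Submodule.IsPrincipal.span_singleton_generator _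
  have hk : k ≠ 0 := fun h => hF (LinearMap.range_eq_bot.1
    ((Submodule.IsPrincipal.eq_bot_iff_generator_eq_zero _).2 h))
  obtain ⟨G, hG⟩ := exists_dual_smul_eq F hspan.ge
  obtain ⟨x, hx⟩ : k ∈ F.range := Submodule.IsPrincipal.generator_mem _
  refine ⟨k, G, LinearMap.ext fun y => (hG y).trans (mul_comm _ _), x, ?_⟩
  exact mul_right_cancel₀ hk (by rw [one_mul, ← smul_eq_mul, ← hG, hx])

theorem exists_hyperbolic_pair_eq_smul [Nontrivial V] (hsurj : Function.Surjective ω)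
    (F : Dual R V) : ∃ (k : R) (p q : V), ω p q = 1 ∧ F = k • ω p := by
  obtain ⟨k, G, hFG, q, hq⟩ := exists_dual_eq_smul_primitive F
  obtain ⟨p, rfl⟩ := hsurj G
  exact ⟨k, p, q, hq, hFG⟩

theorem exists_hyperbolic_pair_dvd_sub [Nontrivial V] (hω : ω.IsAlt)
    (hsurj : Function.Surjective ω) {F : Dual R V} {d : R} (hF : ∃ x, IsCoprime (F x) d) :
    ∃ p q : V, ω p q = 1 ∧ ∀ x, d ∣ F x - ω p x := by
  obtain ⟨k, u, v, huv, rfl⟩ := exists_hyperbolic_pair_eq_smul hsurj F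
  obtain ⟨r, s, hrs⟩ : IsCoprime k d := by
    obtain ⟨x, hx⟩ := hF
    exact IsCoprime.of_mul_left_left hx
  have hvu : ω v u = -1 := by rw [← hω.neg_eq, huv]
  -- Adding `d • v` to `k • u` keeps the functional modulo `d` and makes the vector primitive.
  refine ⟨k • u + d • v, r • v - s • u, ?_, fun x => ⟨-ω v x, ?_⟩⟩
  · simp only [map_add, map_sub, map_smul, LinearMap.add_apply, LinearMap.smul_apply, smul_eq_mul,
      hω.self_eq_zero, huv, hvu]
    linear_combination hrs
  · simp

theorem exists_isSymplecticFamily [Module.Finite R V] (hω : ω.IsAlt)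
    (hsurj : Function.Surjective ω) {g : ℕ} (hg : 2 * g ≤ finrank R V) :
    ∃ α β : Fin g → V, IsSymplecticFamily ω α β := by
  induction g generalizing V with
  | zero => exact ⟨Fin.elim0, Fin.elim0, fun i => i.elim0⟩
  | succ g ih =>
    have : Nontrivial V := nontrivial_of_finrank_pos (R := R) (by omega)
    obtain ⟨-, p, q, hpq, -⟩ := exists_hyperbolic_pair_eq_smul hsurj 0
    have hrank := finrank_le_finrank_pairOrthogonal_add_two (ω := ω) p q
    obtain ⟨α, β, hαβ⟩ := ih (ω := ω.restrict (pairOrthogonal ω p q)) (fun w => hω w)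
      (surjective_restrict_pairOrthogonal hω hsurj hpq) (by omega)
    exact ⟨Fin.cons p (fun i => α i), Fin.cons q (fun i => β i),
      IsSymplecticFamily.cons hω hαβ hpq (fun i => (α i).2) (fun i => (β i).2)⟩

theorem exists_isSymplecticFamily_forall_dvd_sub_one [Module.Finite R V] (hω : ω.IsAlt)
    (hsurj : Function.Surjective ω) {g : ℕ} (hg : 2 * g ≤ finrank R V) {F : Dual R V} {d : R}
    (hF : ∃ x, IsCoprime (F x) d) :
    ∃ α β : Fin g → V, IsSymplecticFamily ω α β ∧ ∀ i, d ∣ F (α i) - 1 ∧ d ∣ F (β i) - 1 := by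
  obtain _ | g := g
  · exact ⟨Fin.elim0, Fin.elim0, fun i => i.elim0, fun i => i.elim0⟩
  have : Nontrivial V := nontrivial_of_finrank_pos (R := R) (by omega)
  obtain ⟨p, q, hpq, hdvd⟩ := exists_hyperbolic_pair_dvd_sub hω hsurj hF
  have hrank := finrank_le_finrank_pairOrthogonal_add_two (ω := ω) p q
  obtain ⟨α, β, hαβ⟩ := exists_isSymplecticFamily (ω := ω.restrict (pairOrthogonal ω p q))
    (g := g) (fun w => hω w) (surjective_restrict_pairOrthogonal hω hsurj hpq) (by omega)
  obtain ⟨α', β', hαβ', hone⟩ := exists_isSymplecticFamily_forall_eq_one hω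
    (α := fun i => α i) (β := fun i => β i) hαβ hpq (fun i => (α i).2) (fun i => (β i).2)
  refine ⟨α', β', hαβ', fun i => ⟨?_, ?_⟩⟩
  · simpa only [(hone i).1] using hdvd (α' i)
  · simpa only [(hone i).2] using hdvd (β' i)

theorem exists_isSymplecticFamily_of_range_eq_span [Module.Finite R V] {P A : Type*}
    [AddCommGroup P] [Module R P] [AddCommGroup A] [Module R A] (hω : ω.IsAlt)
    (hsurj : Function.Surjective ω) {g : ℕ} (hg : 2 * g ≤ finrank R V) {a : A}
    (χ : V × P →ₗ[R] A) (hχ : χ.range = R ∙ a) :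
    ∃ α β : Fin g → V × P, IsSymplecticFamily ω (Prod.fst ∘ α) (Prod.fst ∘ β) ∧
      ∀ i, χ (α i) = a ∧ χ (β i) = a := by
  obtain ⟨F, hF⟩ := exists_dual_smul_eq (χ ∘ₗ LinearMap.inl R V P)
    ((LinearMap.range_comp_le_range _ _).trans hχ.le)
  have hsplit (x : V) (y : P) : χ (x, y) = F x • a + χ (0, y) := by
    rw [← hF, LinearMap.comp_apply, LinearMap.inl_apply, ← map_add, Prod.mk_add_mk, add_zero,
      zero_add]
  let I : Ideal R := (χ ∘ₗ LinearMap.inr R V P).range.comap (LinearMap.toSpanSingleton R A a)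
  let d := Submodule.IsPrincipal.generator I
  have hd (x : V) : d ∣ F x - 1 ↔ ∃ y, χ (x, y) = a := by
    have hmem : 1 - F x ∈ I ↔ ∃ y, χ (0, y) = a - F x • a := by simp [I, sub_smul]
    rw [← dvd_neg, neg_sub, ← Submodule.IsPrincipal.mem_iff_generator_dvd, hmem]
    simp only [hsplit x, ← eq_sub_iff_add_eq']
  obtain ⟨⟨x, y⟩, hxy⟩ : a ∈ χ.range := hχ ▸ Submodule.mem_span_singleton_self a
  have hcoprime : IsCoprime (F x) d := by
    obtain ⟨c, hc⟩ := (hd x).2 ⟨y, hxy⟩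
    exact ⟨1, -c, by linear_combination hc⟩
  obtain ⟨α, β, hαβ, hone⟩ :=
    exists_isSymplecticFamily_forall_dvd_sub_one hω hsurj hg ⟨x, hcoprime⟩
  choose u hu using fun i => (hd (α i)).1 (hone i).1
  choose v hv using fun i => (hd (β i)).1 (hone i).2
  exact ⟨fun i => (α i, u i), fun i => (β i, v i), hαβ, fun i => ⟨hu i, hv i⟩⟩

end PID

end SymplecticFamily

/-- The form `symplecticForm g` as a bilinear form. -/
def symplecticBilinForm (g : ℕ) : LinearMap.BilinForm ℤ (Fin (2 * g) → ℤ) :=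
  LinearMap.mk₂ ℤ (symplecticForm g)
    (fun x y z => by
      simp only [symplecticForm, Pi.add_apply, ← Finset.sum_add_distrib]
      exact Finset.sum_congr rfl fun i _ => by ring)
    (fun c x y => by
      simp only [symplecticForm, Pi.smul_apply, smul_eq_mul, Finset.mul_sum]
      exact Finset.sum_congr rfl fun i _ => by ring)
    (fun x y z => by
      simp only [symplecticForm, Pi.add_apply, ← Finset.sum_add_distrib]
      exact Finset.sum_congr rfl fun i _ => by ring)
    (fun c x y => by
      simp only [symplecticForm, Pi.smul_apply, smul_eq_mul, Finset.mul_sum]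
      exact Finset.sum_congr rfl fun i _ => by ring)

theorem symplecticBilinForm_apply (g : ℕ) (x y : Fin (2 * g) → ℤ) :
    symplecticBilinForm g x y = symplecticForm g x y :=
  rfl

theorem isAlt_symplecticBilinForm (g : ℕ) : (symplecticBilinForm g).IsAlt := by
  intro x
  simp [symplecticBilinForm_apply, symplecticForm, mul_comm]

theorem symplecticForm_single_even {g : ℕ} (x : Fin (2 * g) → ℤ) {i : ℕ} (hi : 2 * i < 2 * g) :
    symplecticForm g x (Pi.single ⟨2 * i, hi⟩ 1) = -x ⟨2 * i + 1, by omega⟩ := by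
  rw [symplecticForm, Finset.sum_eq_single ⟨i, by omega⟩]
  · simp
  · intro j _ hj
    have hji : (j : ℕ) ≠ i := fun h => hj (Fin.ext h)
    simp [hji, show 2 * (j : ℕ) + 1 ≠ 2 * i by omega]
  · simp

theorem symplecticForm_single_odd {g : ℕ} (x : Fin (2 * g) → ℤ) {i : ℕ}
    (hi : 2 * i + 1 < 2 * g) :
    symplecticForm g x (Pi.single ⟨2 * i + 1, hi⟩ 1) = x ⟨2 * i, by omega⟩ := by
  rw [symplecticForm, Finset.sum_eq_single ⟨i, by omega⟩]
  · simp
  · intro j _ hj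
    have hji : (j : ℕ) ≠ i := fun h => hj (Fin.ext h)
    simp [hji, show 2 * (j : ℕ) ≠ 2 * i + 1 by omega]
  · simp

theorem surjective_symplecticBilinForm (g : ℕ) : Function.Surjective (symplecticBilinForm g) := by
  intro F
  refine ⟨fun k => if h : (k : ℕ) % 2 = 0 then F (Pi.single ⟨k + 1, by omega⟩ 1)
    else -F (Pi.single ⟨k - 1, by omega⟩ 1), (Pi.basisFun ℤ _).ext fun ⟨k, hk⟩ => ?_⟩
  rw [Pi.basisFun_apply, symplecticBilinForm_apply]
  obtain ⟨i, rfl | rfl⟩ := k.even_or_odd'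
  · simp [symplecticForm_single_even]
  · simp [symplecticForm_single_odd]

theorem handle_system_rank_one_normal_form_general {A : Type*} [AddCommGroup A] (g n : ℕ) {a : A}
    (χ : HomologyPunctured g n →+ A) (hχ : χ.range = AddSubgroup.zmultiples a) :
    ∃ α β : Fin g → HomologyPunctured g n, IsHandleSystem g n α β ∧
      ∀ i, χ (α i) = a ∧ χ (β i) = a := by
  refine exists_isSymplecticFamily_of_range_eq_span (isAlt_symplecticBilinForm g)
    (surjective_symplecticBilinForm g) (by simp) χ.toIntLinearMap ?_
  refine Submodule.toAddSubgroup_injective ?_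
  rw [Submodule.span_singleton_toAddSubgroup_eq_zmultiples, ← hχ]
  rfl

/-- If `χ : M → ℂ` is an additive homomorphism of non-trivial-ends type whose image is exactly
the subgroup `ℤ ⊂ ℂ` of integers (discrete of rank one, normalized form), then there exists a
system of handle generators `α₁, β₁, …, α_g, β_g` in `M` with `χ(αᵢ) = χ(βᵢ) = 1` for all `i`. -/
theorem handle_system_rank_one_normal_form (g n : ℕ) (hg : 1 ≤ g) (hn : 2 ≤ n)
    (χ : HomologyPunctured g n →+ ℂ)
    (hends : ∃ v : Fin (n - 1) → ℤ, χ (0, v) ≠ 0)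
    (hrange : Set.range χ = Set.range ((↑) : ℤ → ℂ)) :
    ∃ α β : Fin g → HomologyPunctured g n, IsHandleSystem g n α β ∧
      ∀ i : Fin g, χ (α i) = 1 ∧ χ (β i) = 1 := by
  refine handle_system_rank_one_normal_form_general g n χ (SetLike.coe_injective ?_)
  simp [hrange, Set.ext_iff, AddSubgroup.mem_zmultiples_iff]
end

section
/- Let χ : M → ℝ be an additive homomorphism (a real-collinear period character normalized so that its image lies in ℝ) whose restriction to the peripheral subgroup ℤ^{n−1} is nonzero, and assume that the image of χ is not a cyclic subgroup of ℝ (there is no c ∈ ℝ with image(χ) = ℤ·c). Then for every ε > 0 there exists a system of handle generators α₁, β₁, …, α_g, β_g in M such that 0 < χ(αᵢ) < ε and 0 < χ(βᵢ) < ε for every i = 1, …, g. -/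
open scoped BigOperators

/-! Call `x` a handle vector if it belongs to a symplectic basis of `M` modulo its radical. Let `e`
belong to such a basis. For every other basis vector `x`, and for the partner of `e` shifted by any
radical vector, all `x + m e` are again handle vectors, by an Eichler transformation fixing `e`.
If the image of `χ` is not `ℤ χ(e)`, then `χ(x) ∉ ℤ χ(e)` for some such `x`, and when `χ(e) ≠ 0`
rounding `χ(x) / χ(e)` gives a handle vector with nonzero period of size at most `|χ(e)| / 2`.
Iterating, some handle vector `e` has `0 < χ(e) < ε`, and a single Eichler transformation fixing `e`
then reduces the periods of a whole basis modulo `χ(e)` to the interval `(0, χ(e)]`. -/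

/-- `a`, `b` is a system of handle generators for `B` which generates `M` together with the
radical of `B`; this is what a symplectic basis becomes for a degenerate form. -/
structure IsHandleBasis {ι M : Type*} [DecidableEq ι] [AddCommGroup M]
    (B : LinearMap.BilinForm ℤ M) (a b : ι → M) : Prop where
  left : ∀ i j, B (a i) (a j) = 0
  right : ∀ i j, B (b i) (b j) = 0
  pairing : ∀ i j, B (a i) (b j) = if i = j then 1 else 0
  span_sup_ker : Submodule.span ℤ (Set.range a ∪ Set.range b) ⊔ LinearMap.ker B = ⊤

/-- The vectors of `M` that belong to a handle basis indexed by `ι`. Only the first half of the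
basis is mentioned because `a, b` may be replaced by `b, -a`. -/
def handleVectors (ι : Type*) {M : Type*} [DecidableEq ι] [AddCommGroup M]
    (B : LinearMap.BilinForm ℤ M) : Set M :=
  {x | ∃ a b : ι → M, IsHandleBasis B a b ∧ x ∈ Set.range a}

/-- The Eichler transformation attached to `e`, an isometry of an alternating form `B` as soon as
`B e y = 0`. The parameter `r` composes it with a power of the transvection along `e`. -/
def eichlerTransformation {M : Type*} [AddCommGroup M] (B : LinearMap.BilinForm ℤ M)
    (e y : M) (r : ℤ) : M →ₗ[ℤ] M :=
  LinearMap.id + (B.flip y).smulRight e + (B.flip e).smulRight (y + r • e)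

section EichlerTransformation

variable {M : Type*} [AddCommGroup M] {B : LinearMap.BilinForm ℤ M} {e y : M}

lemma eichlerTransformation_apply (r : ℤ) (x : M) :
    eichlerTransformation B e y r x = x + B x y • e + B x e • (y + r • e) :=
  rfl

lemma eichlerTransformation_isometry (hB : B.IsAlt) (hy : B e y = 0) (r : ℤ) (x z : M) :
    B (eichlerTransformation B e y r x) (eichlerTransformation B e y r z) = B x z := by
  have hye : B y e = 0 := by rw [← hB.neg_eq, hy, neg_zero]
  simp only [eichlerTransformation_apply, map_add, map_smul, LinearMap.add_apply,
    LinearMap.smul_apply, smul_eq_mul, hy, hye, hB.self_eq_zero, ← hB.neg_eq z]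
  ring

lemma eichlerTransformation_surjective (hB : B.IsAlt) (hy : B e y = 0) (r : ℤ) :
    Function.Surjective (eichlerTransformation B e y r) := by
  have hye : B y e = 0 := by rw [← hB.neg_eq, hy, neg_zero]
  refine Function.RightInverse.surjective (g := eichlerTransformation B e (-y) (-r)) fun x ↦ ?_
  simp only [eichlerTransformation_apply, map_add, map_neg, map_smul, hy, hye, hB.self_eq_zero]
  module

end EichlerTransformation

namespace IsHandleBasis

variable {ι M : Type*} [DecidableEq ι] [AddCommGroup M] {B : LinearMap.BilinForm ℤ M}
  {a b : ι → M}

lemma pairing_symm (hB : B.IsAlt) (h : IsHandleBasis B a b) (i j : ι) :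
    B (b i) (a j) = if i = j then -1 else 0 := by
  rw [← hB.neg_eq, h.pairing]
  split_ifs <;> simp_all

lemma swap (hB : B.IsAlt) (h : IsHandleBasis B a b) : IsHandleBasis B b (-a) where
  left := h.right
  right i j := by simp [h.left]
  pairing i j := by
    rw [Pi.neg_apply, map_neg, h.pairing_symm hB]
    split_ifs <;> simp
  span_sup_ker := by
    have hneg : Submodule.span ℤ (Set.range (-a)) = Submodule.span ℤ (Set.range a) := by
      rw [← Submodule.span_neg, Set.neg_range]
      simp
    rw [Submodule.span_union, hneg, sup_comm (Submodule.span ℤ (Set.range b)),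
      ← Submodule.span_union, h.span_sup_ker]

lemma left_mem_handleVectors (h : IsHandleBasis B a b) (i : ι) : a i ∈ handleVectors ι B :=
  ⟨a, b, h, i, rfl⟩

lemma right_mem_handleVectors (hB : B.IsAlt) (h : IsHandleBasis B a b) (i : ι) :
    b i ∈ handleVectors ι B :=
  (h.swap hB).left_mem_handleVectors i

lemma addSubgroup_eq_top (h : IsHandleBasis B a b) {H : AddSubgroup M} (ha : ∀ i, a i ∈ H)
    (hb : ∀ i, b i ∈ H) (hker : ∀ w ∈ LinearMap.ker B, w ∈ H) : H = ⊤ := by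
  have hspan : Submodule.span ℤ (Set.range a ∪ Set.range b) ≤ AddSubgroup.toIntSubmodule H :=
    Submodule.span_le.2 <| Set.union_subset (Set.range_subset_iff.2 ha) (Set.range_subset_iff.2 hb)
  exact eq_top_iff.2 fun x _ ↦ sup_le hspan hker (h.span_sup_ker ▸ Submodule.mem_top)

lemma map_isometry (h : IsHandleBasis B a b) {φ : M →ₗ[ℤ] M} (hφ : ∀ x y, B (φ x) (φ y) = B x y)
    (hsurj : Function.Surjective φ) : IsHandleBasis B (φ ∘ a) (φ ∘ b) where
  left i j := by simp [hφ, h.left]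
  right i j := by simp [hφ, h.right]
  pairing i j := by simp [hφ, h.pairing]
  span_sup_ker := by
    have hker : (LinearMap.ker B).map φ ≤ LinearMap.ker B := by
      rintro _ ⟨w, hw, rfl⟩
      refine LinearMap.ext <| hsurj.forall.2 fun x ↦ ?_
      rw [hφ, LinearMap.mem_ker.1 hw]
      rfl
    rw [eq_top_iff, ← LinearMap.range_eq_top.2 hsurj, LinearMap.range_eq_map, ← h.span_sup_ker,
      Submodule.map_sup, Submodule.map_span, Set.image_union, ← Set.range_comp, ← Set.range_comp]
    gcongr

lemma exists_dual [Finite ι] (hB : B.IsAlt) (h : IsHandleBasis B a b) (k l : ι → ℤ) :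
    ∃ y, ∀ i, B (a i) y = k i ∧ B (b i) y = l i := by
  have := Fintype.ofFinite ι
  exact ⟨∑ j, (k j • b j - l j • a j), fun i ↦ by
    simp [h.left, h.right, h.pairing, h.pairing_symm hB]⟩

lemma eichler (hB : B.IsAlt) (h : IsHandleBasis B a b) {o : ι} {y : M} (hy : B (a o) y = 0)
    (r : ℤ) :
    IsHandleBasis B (eichlerTransformation B (a o) y r ∘ a)
      (eichlerTransformation B (a o) y r ∘ b) :=
  h.map_isometry (eichlerTransformation_isometry hB hy r)
    (eichlerTransformation_surjective hB hy r)

lemma eichler_left (h : IsHandleBasis B a b) (o : ι) (y : M) (r : ℤ) (i : ι) :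
    eichlerTransformation B (a o) y r (a i) = a i + B (a i) y • a o := by
  simp [eichlerTransformation_apply, h.left]

lemma eichler_right_of_ne (hB : B.IsAlt) (h : IsHandleBasis B a b) {i o : ι} (hi : i ≠ o) (y : M)
    (r : ℤ) : eichlerTransformation B (a o) y r (b i) = b i + B (b i) y • a o := by
  simp [eichlerTransformation_apply, h.pairing_symm hB, hi]

lemma eichler_right_self (hB : B.IsAlt) (h : IsHandleBasis B a b) (o : ι) (y : M) (r : ℤ) :
    eichlerTransformation B (a o) y r (b o) = b o + B (b o) y • a o - y - r • a o := by
  simp only [eichlerTransformation_apply, h.pairing_symm hB, if_true]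
  module

lemma left_add_zsmul_mem_handleVectors [Finite ι] (hB : B.IsAlt) (h : IsHandleBasis B a b)
    {i o : ι} (hi : i ≠ o) (m : ℤ) : a i + m • a o ∈ handleVectors ι B := by
  obtain ⟨y, hy⟩ := h.exists_dual hB (Pi.single i m) 0
  have hoy : B (a o) y = 0 := by simp [hy, hi.symm]
  simpa [h.eichler_left, hy] using (h.eichler hB hoy 0).left_mem_handleVectors i

lemma right_add_zsmul_mem_handleVectors [Finite ι] (hB : B.IsAlt) (h : IsHandleBasis B a b)
    {i o : ι} (hi : i ≠ o) (m : ℤ) : b i + m • a o ∈ handleVectors ι B := by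
  obtain ⟨y, hy⟩ := h.exists_dual hB 0 (Pi.single i m)
  have hoy : B (a o) y = 0 := by simp [hy]
  simpa [h.eichler_right_of_ne hB hi, hy] using
    (h.eichler hB hoy 0).right_mem_handleVectors hB i

lemma right_add_ker_add_zsmul_mem_handleVectors (hB : B.IsAlt) (h : IsHandleBasis B a b)
    (o : ι) {w : M} (hw : w ∈ LinearMap.ker B) (m : ℤ) :
    b o + w + m • a o ∈ handleVectors ι B := by
  have horth : ∀ x, B x (-w) = 0 := fun x ↦ by
    rw [map_neg, hB.neg_eq, LinearMap.mem_ker.1 hw, LinearMap.zero_apply]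
  simpa [h.eichler_right_self hB, horth] using
    (h.eichler hB (horth (a o)) (-m)).right_mem_handleVectors hB o

lemma exists_add_zsmul_mem_handleVectors [Finite ι] {A : Type*} [AddCommGroup A]
    (hB : B.IsAlt) (h : IsHandleBasis B a b) (o : ι) (χ : M →+ A)
    (hχ : χ.range ≠ AddSubgroup.zmultiples (χ (a o))) :
    ∃ x, χ x ∉ AddSubgroup.zmultiples (χ (a o)) ∧ ∀ m : ℤ, x + m • a o ∈ handleVectors ι B := by
  by_contra! hcon
  let H : AddSubgroup M := (AddSubgroup.zmultiples (χ (a o))).comap χ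
  have hmem {x : M} (hx : ∀ m : ℤ, x + m • a o ∈ handleVectors ι B) : x ∈ H := by
    by_contra hxH
    obtain ⟨m, hm⟩ := hcon x hxH
    exact hm (hx m)
  have ha_self : a o ∈ H := AddSubgroup.mem_zmultiples _
  have hb_add_ker {w : M} (hw : w ∈ LinearMap.ker B) : b o + w ∈ H :=
    hmem (h.right_add_ker_add_zsmul_mem_handleVectors hB o hw)
  have hb_self : b o ∈ H := by simpa using hb_add_ker (zero_mem _)
  have ha (i : ι) : a i ∈ H := by
    obtain rfl | hi := eq_or_ne i o
    · exact ha_self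
    · exact hmem (h.left_add_zsmul_mem_handleVectors hB hi)
  have hb (i : ι) : b i ∈ H := by
    obtain rfl | hi := eq_or_ne i o
    · exact hb_self
    · exact hmem (h.right_add_zsmul_mem_handleVectors hB hi)
  have hH : H = ⊤ := h.addSubgroup_eq_top ha hb fun w hw ↦
    (H.add_mem_cancel_left hb_self).1 (hb_add_ker hw)
  refine hχ (le_antisymm ?_ ?_)
  · rintro _ ⟨x, rfl⟩
    exact (hH ▸ AddSubgroup.mem_top x : x ∈ H)
  · exact AddSubgroup.zmultiples_le_of_mem ⟨a o, rfl⟩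

lemma exists_forall_mem_Ioc [Finite ι] {A : Type*} [AddCommGroup A] [LinearOrder A]
    [IsOrderedAddMonoid A] [Archimedean A] (hB : B.IsAlt) (h : IsHandleBasis B a b) (χ : M →+ A)
    {o : ι} (ho : 0 < χ (a o)) :
    ∃ α β : ι → M, IsHandleBasis B α β ∧
      ∀ i, χ (α i) ∈ Set.Ioc 0 (χ (a o)) ∧ χ (β i) ∈ Set.Ioc 0 (χ (a o)) := by
  have hmod (t : A) : t - toIocDiv ho 0 t • χ (a o) ∈ Set.Ioc 0 (χ (a o)) := by
    simpa using sub_toIocDiv_zsmul_mem_Ioc ho 0 t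
  obtain ⟨y, hy⟩ := h.exists_dual hB (fun i ↦ -toIocDiv ho 0 (χ (a i)))
    (fun i ↦ -toIocDiv ho 0 (χ (b i)))
  have hoy : B (a o) y = 0 := by
    rw [(hy o).1, neg_eq_zero]
    simpa using toIocDiv_apply_right ho 0
  let r : ℤ := toIocDiv ho 0 (χ (b o + B (b o) y • a o - y))
  refine ⟨_, _, h.eichler hB hoy r, fun i ↦ ⟨?_, ?_⟩⟩
  · simpa [h.eichler_left, hy, ← sub_eq_add_neg] using hmod (χ (a i))
  · obtain rfl | hi := eq_or_ne i o
    · simpa only [Function.comp_apply, h.eichler_right_self hB, map_sub χ _ (r • _),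
        map_zsmul] using hmod (χ (b i + B (b i) y • a i - y))
    · simpa [h.eichler_right_of_ne hB hi, hy, ← sub_eq_add_neg] using hmod (χ (b i))

end IsHandleBasis

section HandleVectors

variable {ι M : Type*} [DecidableEq ι] [AddCommGroup M] {B : LinearMap.BilinForm ℤ M}

lemma neg_mem_handleVectors (hB : B.IsAlt) {x : M} (hx : x ∈ handleVectors ι B) :
    -x ∈ handleVectors ι B := by
  obtain ⟨a, b, h, i, rfl⟩ := hx
  exact (h.swap hB).right_mem_handleVectors hB i

variable [Finite ι] (hB : B.IsAlt) (χ : M →+ ℝ) (hχ : ∀ c, χ.range ≠ AddSubgroup.zmultiples c)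
include hB hχ

lemma exists_mem_handleVectors_ne_zero (hne : (handleVectors ι B).Nonempty) :
    ∃ x ∈ handleVectors ι B, χ x ≠ 0 := by
  obtain ⟨_, a, b, h, o, rfl⟩ := hne
  obtain ⟨x, hx, hxe⟩ := h.exists_add_zsmul_mem_handleVectors hB o χ (hχ _)
  exact ⟨x, by simpa using hxe 0, fun hx0 ↦ hx (hx0 ▸ zero_mem _)⟩

lemma exists_mem_handleVectors_abs_le_half {e : M} (he : e ∈ handleVectors ι B) (he0 : χ e ≠ 0) :
    ∃ x ∈ handleVectors ι B, χ x ≠ 0 ∧ |χ x| ≤ |χ e| / 2 := by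
  obtain ⟨a, b, h, o, rfl⟩ := he
  obtain ⟨x, hx, hxe⟩ := h.exists_add_zsmul_mem_handleVectors hB o χ (hχ _)
  let m : ℤ := round (χ x / χ (a o))
  have hval : χ (x + (-m) • a o) = (χ x / χ (a o) - m) * χ (a o) := by
    rw [map_add, map_zsmul, sub_mul, div_mul_cancel₀ _ he0, neg_smul, zsmul_eq_mul, sub_eq_add_neg]
  refine ⟨_, hxe (-m), fun hzero ↦ hx ⟨m, ?_⟩, ?_⟩
  · rw [map_add, map_zsmul, neg_smul, add_neg_eq_zero] at hzero
    exact hzero.symm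
  · calc |χ (x + (-m) • a o)| = |χ x / χ (a o) - m| * |χ (a o)| := by rw [hval, abs_mul]
      _ ≤ 1 / 2 * |χ (a o)| := by gcongr; exact abs_sub_round _
      _ = |χ (a o)| / 2 := by ring

lemma exists_mem_handleVectors_mem_Ioo (hne : (handleVectors ι B).Nonempty) {ε : ℝ} (hε : 0 < ε) :
    ∃ x ∈ handleVectors ι B, χ x ∈ Set.Ioo 0 ε := by
  obtain ⟨e, he, he0⟩ := exists_mem_handleVectors_ne_zero hB χ hχ hne
  have hpow (n : ℕ) : ∃ x ∈ handleVectors ι B, χ x ≠ 0 ∧ |χ x| ≤ |χ e| / 2 ^ n := by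
    induction n with
    | zero => exact ⟨e, he, he0, by simp⟩
    | succ n ih =>
      obtain ⟨x, hx, hx0, hxn⟩ := ih
      obtain ⟨z, hz, hz0, hzx⟩ := exists_mem_handleVectors_abs_le_half hB χ hχ hx hx0
      refine ⟨z, hz, hz0, hzx.trans ?_⟩
      rw [pow_succ, ← div_div]
      gcongr
  obtain ⟨n, hn⟩ := pow_unbounded_of_one_lt (|χ e| / ε) one_lt_two
  obtain ⟨x, hx, hx0, hxn⟩ := hpow n
  have hxε : |χ x| < ε := hxn.trans_lt (by rwa [div_lt_comm₀ (by positivity) hε])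
  obtain hneg | hpos := hx0.lt_or_gt
  · refine ⟨-x, neg_mem_handleVectors hB hx, ?_⟩
    rw [abs_of_neg hneg] at hxε
    simpa using ⟨hneg, hxε⟩
  · rw [abs_of_pos hpos] at hxε
    exact ⟨x, hx, hpos, hxε⟩

end HandleVectors

theorem handle_system_with_small_periods_general {ι M : Type*} [Finite ι] [DecidableEq ι]
    [AddCommGroup M] {B : LinearMap.BilinForm ℤ M} (hB : B.IsAlt) {a b : ι → M}
    (hab : IsHandleBasis B a b) (χ : M →+ ℝ) (hχ : ∀ c, χ.range ≠ AddSubgroup.zmultiples c)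
    {ε : ℝ} (hε : 0 < ε) :
    ∃ α β : ι → M, IsHandleBasis B α β ∧
      ∀ i, χ (α i) ∈ Set.Ioo 0 ε ∧ χ (β i) ∈ Set.Ioo 0 ε := by
  obtain hι | ⟨⟨o⟩⟩ := isEmpty_or_nonempty ι
  · exact ⟨a, b, hab, hι.elim⟩
  obtain ⟨_, ⟨a', b', h', o', rfl⟩, hpos, hlt⟩ :=
    exists_mem_handleVectors_mem_Ioo hB χ hχ ⟨_, hab.left_mem_handleVectors o⟩ hε
  obtain ⟨α, β, hαβ, hmem⟩ := h'.exists_forall_mem_Ioc hB χ hpos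
  have hsub : Set.Ioc 0 (χ (a' o')) ⊆ Set.Ioo 0 ε := Set.Ioc_subset_Ioo_right hlt
  exact ⟨α, β, hαβ, fun i ↦ ⟨hsub (hmem i).1, hsub (hmem i).2⟩⟩

/-- The intersection form on `HomologyPunctured g n` as a bilinear form: `symplecticForm` on
`ℤ^{2g}`, extended by zero on the peripheral factor. -/
def intersectionForm (g n : ℕ) : LinearMap.BilinForm ℤ (HomologyPunctured g n) :=
  LinearMap.mk₂ ℤ (fun x y ↦ symplecticForm g x.1 y.1)
    (fun x y z ↦ by
      simp only [symplecticForm, Prod.fst_add, Pi.add_apply, add_mul, Finset.sum_sub_distrib,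
        Finset.sum_add_distrib]
      ring)
    (fun c x y ↦ by simp [symplecticForm, mul_assoc, ← Finset.mul_sum, mul_sub])
    (fun x y z ↦ by
      simp only [symplecticForm, Prod.fst_add, Pi.add_apply, mul_add, Finset.sum_sub_distrib,
        Finset.sum_add_distrib]
      ring)
    (fun c x y ↦ by simp [symplecticForm, mul_left_comm, ← Finset.mul_sum, mul_sub])

lemma intersectionForm_apply {g n : ℕ} (x y : HomologyPunctured g n) :
    intersectionForm g n x y = symplecticForm g x.1 y.1 :=
  rfl

lemma intersectionForm_isAlt (g n : ℕ) : (intersectionForm g n).IsAlt := fun x ↦ by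
  simp [intersectionForm_apply, symplecticForm, mul_comm]

lemma mk_zero_mem_ker_intersectionForm {g n : ℕ} (v : Fin (n - 1) → ℤ) :
    ((0, v) : HomologyPunctured g n) ∈ LinearMap.ker (intersectionForm g n) :=
  LinearMap.ext fun x ↦ by simp [intersectionForm_apply, symplecticForm]

/-- The handle generator `αᵢ` of the standard system: the basis vector `2i` of `ℤ^{2g}`. -/
def standardAlpha (g n : ℕ) (i : Fin g) : HomologyPunctured g n :=
  (Pi.single ⟨2 * i, by omega⟩ 1, 0)

/-- The handle generator `βᵢ` of the standard system: the basis vector `2i + 1` of `ℤ^{2g}`. -/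
def standardBeta (g n : ℕ) (i : Fin g) : HomologyPunctured g n :=
  (Pi.single ⟨2 * i + 1, by omega⟩ 1, 0)

lemma span_standard_sup_ker_intersectionForm (g n : ℕ) :
    Submodule.span ℤ (Set.range (standardAlpha g n) ∪ Set.range (standardBeta g n)) ⊔
      LinearMap.ker (intersectionForm g n) = ⊤ := by
  rw [eq_top_iff, ← Submodule.prod_top, LinearMap.prod_eq_sup_map,
    ← (Pi.basisFun ℤ (Fin (2 * g))).span_eq, Submodule.map_span]
  refine sup_le_sup (Submodule.span_mono ?_) ?_
  · rintro _ ⟨_, ⟨⟨j, hj⟩, rfl⟩, rfl⟩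
    obtain ⟨i, rfl | rfl⟩ := Nat.even_or_odd' j
    · exact Or.inl ⟨⟨i, by omega⟩, by simp [standardAlpha]⟩
    · exact Or.inr ⟨⟨i, by omega⟩, by simp [standardBeta]⟩
  · rintro _ ⟨v, -, rfl⟩
    exact mk_zero_mem_ker_intersectionForm v

lemma isHandleBasis_standard (g n : ℕ) :
    IsHandleBasis (intersectionForm g n) (standardAlpha g n) (standardBeta g n) where
  left i j := by
    simp [intersectionForm_apply, symplecticForm, standardAlpha, Pi.single_apply,
      Nat.two_mul_ne_two_mul_add_one.symm]
  right i j := by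
    simp [intersectionForm_apply, symplecticForm, standardBeta, Pi.single_apply,
      Nat.two_mul_ne_two_mul_add_one]
  pairing i j := by
    simp [intersectionForm_apply, symplecticForm, standardAlpha, standardBeta, Pi.single_apply,
      Nat.two_mul_ne_two_mul_add_one, Fin.val_inj, eq_comm]
  span_sup_ker := span_standard_sup_ker_intersectionForm g n

/-- Let `χ : M → ℝ` be an additive homomorphism (a real-collinear period character normalized
so that its image lies in `ℝ`) whose restriction to the peripheral subgroup `ℤ^{n-1}` is
nonzero, and assume its image is not a cyclic subgroup of `ℝ`. Then for every `ε > 0` there is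
a system of handle generators with `0 < χ(αᵢ) < ε` and `0 < χ(βᵢ) < ε` for every `i`. -/
theorem handle_system_with_small_periods (g n : ℕ) (hg : 1 ≤ g) (hn : 2 ≤ n)
    (χ : HomologyPunctured g n →+ ℝ)
    (hends : ∃ v : Fin (n - 1) → ℤ, χ (0, v) ≠ 0)
    (hcyc : ¬ ∃ c : ℝ, Set.range χ = Set.range (fun k : ℤ => (k : ℝ) * c)) :
    ∀ ε : ℝ, 0 < ε →
      ∃ α β : Fin g → HomologyPunctured g n, IsHandleSystem g n α β ∧
        ∀ i : Fin g, (0 < χ (α i) ∧ χ (α i) < ε) ∧ (0 < χ (β i) ∧ χ (β i) < ε) := by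
  intro ε hε
  have hχ (c : ℝ) : χ.range ≠ AddSubgroup.zmultiples c := fun hc ↦ hcyc ⟨c, by
    simpa [AddSubgroup.coe_zmultiples] using congrArg (fun H : AddSubgroup ℝ ↦ (H : Set ℝ)) hc⟩
  obtain ⟨α, β, h, hmem⟩ := handle_system_with_small_periods_general
    (intersectionForm_isAlt g n) (isHandleBasis_standard g n) χ hχ hε
  exact ⟨α, β, fun i j ↦ ⟨h.left i j, h.right i j, h.pairing i j⟩, hmem⟩
end
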